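/- arXiv:1404.0420 — 3 statements merged into one kernel-verified Lean document; each statement's English description precedes it below -/
import Mathlib

section
/- Let H be a Hopf algebra over a field K, (B, π) a quantum subgroup of H, and (L, η) a left B-module, and let L' = { w ∈ H ⊗ L : for all b ∈ B, (R ⊗ η_b)(w) = (ι ⊗ η_b)(w) } where R = (id_H ⊗ π) ∘ Δ. Then the assignment α(h ⊗ w) = (id_H ⊗ η_{π(h)})(w) for h ∈ H and w ∈ L' (on pure tensors w = h' ⊗ l, α(h ⊗ h' ⊗ l) = h' ⊗ η(π(h) ⊗ l)) takes values in L' and defines a left H-module structure on L': α(1 ⊗ w) = w and α(h ⊗ α(h' ⊗ w)) = α(hh' ⊗ w) for all h, h' ∈ H, w ∈ L'. -/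
open TensorProduct

/-- The subspace `L' = {w ∈ H ⊗ L : ∀ b ∈ B, (R ⊗ η_b)(w) = (ι ⊗ η_b)(w)}`, where
`R = (id_H ⊗ π) ∘ Δ`, `η_b(l) = η(b ⊗ l)` and `ι(h) = h ⊗ 1_B`. -/
noncomputable def inducedSubspace
    (K : Type*) [Field K]
    (H : Type*) [Ring H] [HopfAlgebra K H]
    (B : Type*) [Ring B] [Bialgebra K B]
    (π : H →ₐc[K] B)
    (L : Type*) [AddCommGroup L] [Module K L]
    (η : B ⊗[K] L →ₗ[K] L) : Submodule K (H ⊗[K] L) where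
  carrier := {w | ∀ b : B,
    TensorProduct.map
      ((TensorProduct.map (LinearMap.id : H →ₗ[K] H) (π : H →ₗ[K] B))
        ∘ₗ Coalgebra.comul)
      (η ∘ₗ TensorProduct.mk K B L b) w
    = TensorProduct.map ((TensorProduct.mk K H B).flip (1 : B))
        (η ∘ₗ TensorProduct.mk K B L b) w}
  add_mem' := by
    intro a b ha hb c
    simp only [Set.mem_setOf_eq] at *
    simp [map_add, ha c, hb c]
  zero_mem' := by
    intro b
    simp
  smul_mem' := by
    intro c w hw b
    simp only [Set.mem_setOf_eq] at *
    simp [map_smul, hw b]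

section Representations

variable {R A V : Type*} [CommSemiring R] [Semiring A] [Algebra R A] [AddCommMonoid V] [Module R V]

/-- The representation on `V` given by an `R`-linear unital and associative action `A ⊗ V → V`,
so that the endomorphism attached to `a` is `v ↦ η (a ⊗ v)`. -/
def algHomOfAction (η : A ⊗[R] V →ₗ[R] V) (one_act : ∀ v, η (1 ⊗ₜ v) = v)
    (act_act : ∀ a a' v, η (a ⊗ₜ η (a' ⊗ₜ v)) = η ((a * a') ⊗ₜ v)) :
    A →ₐ[R] Module.End R V :=
  AlgHom.ofLinearMap (TensorProduct.curry η) (LinearMap.ext one_act)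
    fun a a' => LinearMap.ext fun v => (act_act a a' v).symm

/-- The subrepresentation of `ρ` on an invariant submodule `p`. -/
def restrictAlgHom (ρ : A →ₐ[R] Module.End R V) (p : Submodule R V)
    (hp : ∀ a, ∀ v ∈ p, ρ a v ∈ p) : A →ₐ[R] Module.End R p where
  toFun a := (ρ a).restrict (hp a)
  map_zero' := by ext; simp
  map_one' := by ext; simp
  map_add' _ _ := by ext; simp
  map_mul' _ _ := by ext; simp
  commutes' _ := by ext; simp

end Representations

section TensorEqLocus

variable {R M N L B : Type*} [CommSemiring R] [AddCommMonoid M] [Module R M]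
  [AddCommMonoid N] [Module R N] [AddCommMonoid L] [Module R L] [Semiring B] [Algebra R B]

/-- The submodule of those `w ∈ M ⊗ L` on which `f ⊗ ρ b` and `g ⊗ ρ b` agree for every `b`.
The subspace `L'` is the case `f = (id ⊗ π) ∘ Δ`, `g = ι`, with `ρ` the representation of `η`. -/
def tensorEqLocus (f g : M →ₗ[R] N) (ρ : B →ₐ[R] Module.End R L) : Submodule R (M ⊗[R] L) :=
  ⨅ b, LinearMap.eqLocus (TensorProduct.map f (ρ b)) (TensorProduct.map g (ρ b))

theorem mem_tensorEqLocus {f g : M →ₗ[R] N} {ρ : B →ₐ[R] Module.End R L} {w : M ⊗[R] L} :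
    w ∈ tensorEqLocus f g ρ ↔
      ∀ b, TensorProduct.map f (ρ b) w = TensorProduct.map g (ρ b) w := by
  simp [tensorEqLocus]

theorem map_lTensor_algHom (f : M →ₗ[R] N) (ρ : B →ₐ[R] Module.End R L) (b c : B)
    (w : M ⊗[R] L) :
    TensorProduct.map f (ρ b) ((ρ c).lTensor M w) = TensorProduct.map f (ρ (b * c)) w := by
  rw [LinearMap.map_lTensor, map_mul, Module.End.mul_eq_comp]

theorem lTensor_mem_tensorEqLocus {f g : M →ₗ[R] N} {ρ : B →ₐ[R] Module.End R L}
    (c : B) {w : M ⊗[R] L} (hw : w ∈ tensorEqLocus f g ρ) :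
    (ρ c).lTensor M w ∈ tensorEqLocus f g ρ := by
  refine mem_tensorEqLocus.mpr fun b => ?_
  -- The condition at `b` for the image of `w` is the condition at `b * c` for `w`.
  rw [map_lTensor_algHom, map_lTensor_algHom]
  exact mem_tensorEqLocus.mp hw (b * c)

/-- The representation `b ↦ id ⊗ ρ b` on `tensorEqLocus f g ρ`. -/
def tensorEqLocusAlgHom (f g : M →ₗ[R] N) (ρ : B →ₐ[R] Module.End R L) :
    B →ₐ[R] Module.End R (tensorEqLocus f g ρ) :=
  restrictAlgHom ((Module.End.lTensorAlgHom R L M).comp ρ) (tensorEqLocus f g ρ)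
    fun b _ => lTensor_mem_tensorEqLocus b

theorem inducedSubspace_module_structure_general {A : Type*} [Semiring A] [Algebra R A]
    (f g : M →ₗ[R] N) (φ : A →ₐ[R] B) (ρ : B →ₐ[R] Module.End R L) :
    ∃ α : A ⊗[R] tensorEqLocus f g ρ →ₗ[R] tensorEqLocus f g ρ,
      (∀ a w, (α (a ⊗ₜ w) : M ⊗[R] L) = (ρ (φ a)).lTensor M w) ∧
      (∀ w, α (1 ⊗ₜ w) = w) ∧
      (∀ a a' w, α (a ⊗ₜ α (a' ⊗ₜ w)) = α ((a * a') ⊗ₜ w)) := by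
  let σ : A →ₐ[R] Module.End R (tensorEqLocus f g ρ) := (tensorEqLocusAlgHom f g ρ).comp φ
  exact ⟨TensorProduct.lift σ.toLinearMap, fun a w => rfl, fun w => by simp,
    fun a a' w => by simp⟩

end TensorEqLocus

theorem inducedSubspace_eq_tensorEqLocus
    {K H B L : Type*} [Field K] [Ring H] [HopfAlgebra K H] [Ring B] [Bialgebra K B]
    [AddCommGroup L] [Module K L] (π : H →ₐc[K] B) (η : B ⊗[K] L →ₗ[K] L)
    (one_act : ∀ l, η (1 ⊗ₜ l) = l)
    (act_act : ∀ b b' l, η (b ⊗ₜ η (b' ⊗ₜ l)) = η ((b * b') ⊗ₜ l)) :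
    inducedSubspace K H B π L η =
      tensorEqLocus ((π : H →ₗ[K] B).lTensor H ∘ₗ Coalgebra.comul)
        ((TensorProduct.mk K H B).flip 1) (algHomOfAction η one_act act_act) := by
  ext w
  rw [mem_tensorEqLocus]
  rfl

/-- The assignment `α(h ⊗ w) = (id_H ⊗ η_{π(h)})(w)` takes values in `L'` and defines
a left `H`-module structure on `L'`. -/
theorem inducedSubspace_module_structure
    (K : Type*) [Field K]
    (H : Type*) [Ring H] [HopfAlgebra K H]
    (B : Type*) [Ring B] [Bialgebra K B]
    (π : H →ₐc[K] B) (hπ : Function.Surjective π)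
    (L : Type*) [AddCommGroup L] [Module K L]
    (η : B ⊗[K] L →ₗ[K] L)
    (hη1 : ∀ l : L, η ((1 : B) ⊗ₜ[K] l) = l)
    (hη2 : ∀ (b b' : B) (l : L),
      η (b ⊗ₜ[K] η (b' ⊗ₜ[K] l)) = η ((b * b') ⊗ₜ[K] l)) :
    ∃ α : H ⊗[K] (inducedSubspace K H B π L η) →ₗ[K] (inducedSubspace K H B π L η),
      -- α is given by α(h ⊗ w) = (id_H ⊗ η_{π(h)})(w)
      (∀ (h : H) (w : inducedSubspace K H B π L η),
        ((α (h ⊗ₜ[K] w) : inducedSubspace K H B π L η) : H ⊗[K] L)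
          = TensorProduct.map (LinearMap.id : H →ₗ[K] H)
              (η ∘ₗ TensorProduct.mk K B L (π h)) (w : H ⊗[K] L)) ∧
      -- α is a left H-module structure on L'
      (∀ w : inducedSubspace K H B π L η, α ((1 : H) ⊗ₜ[K] w) = w) ∧
      (∀ (h h' : H) (w : inducedSubspace K H B π L η),
        α (h ⊗ₜ[K] α (h' ⊗ₜ[K] w)) = α ((h * h') ⊗ₜ[K] w)) := by
  rw [inducedSubspace_eq_tensorEqLocus π η hη1 hη2]
  exact inducedSubspace_module_structure_general _ _ (π : H →ₐ[K] B) (algHomOfAction η hη1 hη2)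
end

section
/- Let H be a Hopf algebra over a field K, (B, π) a quantum subgroup of H, and (L, η) a left B-module, and let L' = { w ∈ H ⊗ L : for all b ∈ B, (R ⊗ η_b)(w) = (ι ⊗ η_b)(w) } where R = (id_H ⊗ π) ∘ Δ. Then the restriction β of Δ ⊗ id_L to L' (on pure tensors, β(h ⊗ l) = Δ(h) ⊗ l) takes values in H ⊗ L' and defines a left H-comodule structure on L': (ε ⊗ id_{L'}) ∘ β equals the canonical isomorphism L' ≅ K ⊗ L', and (Δ ⊗ id_{L'}) ∘ β = (id_H ⊗ β) ∘ β. -/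
open TensorProduct

/-!
`H ⊗ L` is a comodule through `Δ ⊗ id`. The maps `R` (by coassociativity) and `ι` are colinear,
hence so are all `R ⊗ η_b` and `ι ⊗ η_b`, and `L'` is a simultaneous equalizer of pairs of colinear
maps. Since `H` is free, `H ⊗ -` commutes with arbitrary intersections of equalizers: in coordinates
with respect to a basis of `H`, membership in `H ⊗ L'` is membership of every coordinate in `L'`. So
the coaction restricts to `L'`, and the comodule axioms, which hold on `H ⊗ L`, descend along the
injections `L' → H ⊗ L` and `H ⊗ H ⊗ L' → H ⊗ H ⊗ H ⊗ L`.
-/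

section FreeTensor

variable {K H V W κ : Type*} [CommSemiring K] [AddCommMonoid H] [Module K H]
  [AddCommMonoid V] [Module K V] [AddCommMonoid W] [Module K W]

lemma equivFinsuppOfBasisLeft_lTensor_apply [DecidableEq κ] (b : Module.Basis κ K H)
    (f : V →ₗ[K] W) (t : H ⊗[K] V) (k : κ) :
    equivFinsuppOfBasisLeft b (f.lTensor H t) k = f (equivFinsuppOfBasisLeft b t k) := by
  induction t with
  | zero => simp
  | add x y hx hy => simp only [map_add, Finsupp.add_apply, hx, hy]
  | tmul h v => simp

lemma mem_range_lTensor_subtype_of_forall_coord_mem [DecidableEq κ] (b : Module.Basis κ K H)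
    (S : Submodule K V) (t : H ⊗[K] V) (ht : ∀ k, equivFinsuppOfBasisLeft b t k ∈ S) :
    t ∈ LinearMap.range (S.subtype.lTensor H) := by
  rw [← (equivFinsuppOfBasisLeft b).symm_apply_apply t, equivFinsuppOfBasisLeft_symm_apply]
  exact Submodule.sum_mem _ fun k _ ↦ ⟨b k ⊗ₜ ⟨_, ht k⟩, rfl⟩

lemma mem_range_lTensor_subtype_iInf_eqLocus [Module.Free K H] {ι : Type*} {M : ι → Type*}
    [∀ i, AddCommMonoid (M i)] [∀ i, Module K (M i)] (f g : ∀ i, V →ₗ[K] M i) (t : H ⊗[K] V)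
    (ht : ∀ i, (f i).lTensor H t = (g i).lTensor H t) :
    t ∈ LinearMap.range ((⨅ i, LinearMap.eqLocus (f i) (g i)).subtype.lTensor H) := by
  classical
  let b := Module.Free.chooseBasis K H
  refine mem_range_lTensor_subtype_of_forall_coord_mem b _ t fun k ↦ ?_
  refine (Submodule.mem_iInf _).2 fun i ↦ LinearMap.mem_eqLocus.2 ?_
  rw [← equivFinsuppOfBasisLeft_lTensor_apply, ht, equivFinsuppOfBasisLeft_lTensor_apply]

end FreeTensor

section Coaction

variable {K H V W X L N : Type*} [CommSemiring K] [AddCommMonoid H] [Module K H]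
  [AddCommMonoid V] [Module K V] [AddCommMonoid W] [Module K W] [AddCommMonoid X] [Module K X]
  [AddCommMonoid L] [Module K L] [AddCommMonoid N] [Module K N]

/-- `β` is a left `H`-comodule structure on `V`. -/
structure IsCoaction [Coalgebra K H] (β : V →ₗ[K] H ⊗[K] V) : Prop where
  counit_comp : Coalgebra.counit.rTensor V ∘ₗ β = (TensorProduct.lid K V).symm.toLinearMap
  coassoc : (TensorProduct.assoc K H H V).toLinearMap ∘ₗ Coalgebra.comul.rTensor V ∘ₗ β
    = β.lTensor H ∘ₗ β

/-- `f` is a morphism of left `H`-comodules from `(V, γ)` to `(W, δ)`; the notion makes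
sense for arbitrary linear maps `γ` and `δ`. -/
def IsColinear (γ : V →ₗ[K] H ⊗[K] V) (δ : W →ₗ[K] H ⊗[K] W) (f : V →ₗ[K] W) : Prop :=
  f.lTensor H ∘ₗ γ = δ ∘ₗ f

/-- The coaction `γ ⊗ id` on `V ⊗ L`, for `γ` a coaction on `V` and `L` a plain module. For
`γ = Δ` this is the cofree comodule on `L`. -/
noncomputable def rTensorCoaction (γ : V →ₗ[K] H ⊗[K] V) (L : Type*) [AddCommMonoid L]
    [Module K L] : V ⊗[K] L →ₗ[K] H ⊗[K] (V ⊗[K] L) :=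
  (TensorProduct.assoc K H V L).toLinearMap ∘ₗ γ.rTensor L

lemma isCoaction_comul [Coalgebra K H] : IsCoaction (Coalgebra.comul : H →ₗ[K] H ⊗[K] H) where
  counit_comp := Coalgebra.rTensor_counit_comp_comul
  coassoc := Coalgebra.coassoc

lemma IsCoaction.isColinear [Coalgebra K H] {γ : V →ₗ[K] H ⊗[K] V} (hγ : IsCoaction γ) :
    IsColinear γ (rTensorCoaction Coalgebra.comul V) γ :=
  hγ.coassoc.symm

namespace IsColinear

variable {γ : V →ₗ[K] H ⊗[K] V} {δ : W →ₗ[K] H ⊗[K] W} {ρ : X →ₗ[K] H ⊗[K] X}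

lemma comp {g : W →ₗ[K] X} {f : V →ₗ[K] W} (hg : IsColinear δ ρ g) (hf : IsColinear γ δ f) :
    IsColinear γ ρ (g ∘ₗ f) := by
  unfold IsColinear at *
  rw [LinearMap.lTensor_comp, LinearMap.comp_assoc, hf, ← LinearMap.comp_assoc, hg,
    LinearMap.comp_assoc]

lemma id (γ : V →ₗ[K] H ⊗[K] V) : IsColinear γ γ LinearMap.id := by
  simp [IsColinear]

lemma map {f : V →ₗ[K] W} (hf : IsColinear γ δ f) (φ : L →ₗ[K] N) :
    IsColinear (rTensorCoaction γ L) (rTensorCoaction δ N) (TensorProduct.map f φ) := by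
  have assoc_natural : (TensorProduct.map f φ).lTensor H ∘ₗ
      (TensorProduct.assoc K H V L).toLinearMap =
      (TensorProduct.assoc K H W N).toLinearMap ∘ₗ TensorProduct.map (f.lTensor H) φ :=
    map_map_comp_assoc_eq LinearMap.id f φ
  unfold IsColinear at *
  simp only [rTensorCoaction, ← LinearMap.comp_assoc, assoc_natural]
  simp only [LinearMap.comp_assoc, LinearMap.map_comp_rTensor, LinearMap.rTensor_comp_map, hf]

lemma mk_flip (γ : V →ₗ[K] H ⊗[K] V) (l : L) :
    IsColinear γ (rTensorCoaction γ L) ((TensorProduct.mk K V L).flip l) := by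
  have assoc_flip : ((TensorProduct.mk K V L).flip l).lTensor H =
      (TensorProduct.assoc K H V L).toLinearMap ∘ₗ
        (TensorProduct.mk K (H ⊗[K] V) L).flip l := by
    ext; simp
  rw [IsColinear, assoc_flip]
  rfl

lemma assoc (γ : V →ₗ[K] H ⊗[K] V) :
    IsColinear (rTensorCoaction (rTensorCoaction γ L) N) (rTensorCoaction γ (L ⊗[K] N))
      (TensorProduct.assoc K V L N).toLinearMap := by
  have pentagon : (TensorProduct.assoc K V L N).toLinearMap.lTensor H ∘ₗ
      (TensorProduct.assoc K H (V ⊗[K] L) N).toLinearMap ∘ₗ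
        (TensorProduct.assoc K H V L).toLinearMap.rTensor N =
      (TensorProduct.assoc K H V (L ⊗[K] N)).toLinearMap ∘ₗ
        (TensorProduct.assoc K (H ⊗[K] V) L N).toLinearMap := by
    ext; simp
  have assoc_natural : (TensorProduct.assoc K (H ⊗[K] V) L N).toLinearMap ∘ₗ
      (γ.rTensor L).rTensor N =
      γ.rTensor (L ⊗[K] N) ∘ₗ (TensorProduct.assoc K V L N).toLinearMap := by
    ext; simp
  calc (TensorProduct.assoc K V L N).toLinearMap.lTensor H ∘ₗ
        rTensorCoaction (rTensorCoaction γ L) N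
      = ((TensorProduct.assoc K V L N).toLinearMap.lTensor H ∘ₗ
          (TensorProduct.assoc K H (V ⊗[K] L) N).toLinearMap ∘ₗ
            (TensorProduct.assoc K H V L).toLinearMap.rTensor N) ∘ₗ
          (γ.rTensor L).rTensor N := by
        simp only [rTensorCoaction, LinearMap.rTensor_comp, LinearMap.comp_assoc]
    _ = rTensorCoaction γ (L ⊗[K] N) ∘ₗ (TensorProduct.assoc K V L N).toLinearMap := by
        rw [pentagon, LinearMap.comp_assoc, assoc_natural, rTensorCoaction, LinearMap.comp_assoc]

lemma of_comp_of_injective [Module.Flat K H] {g : W →ₗ[K] X} {f : V →ₗ[K] W}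
    (hgf : IsColinear γ ρ (g ∘ₗ f)) (hg : IsColinear δ ρ g) (g_injective : Function.Injective g) :
    IsColinear γ δ f := by
  have lTensor_injective : Function.Injective (g.lTensor H) :=
    Module.Flat.lTensor_preserves_injective_linearMap g g_injective
  unfold IsColinear at *
  rw [← LinearMap.cancel_left lTensor_injective, ← LinearMap.comp_assoc, ← LinearMap.lTensor_comp,
    hgf, ← LinearMap.comp_assoc, ← LinearMap.comp_assoc, hg]

lemma isCoaction_of_injective [Coalgebra K H] [Module.Flat K H] {f : V →ₗ[K] W}
    (hf : IsColinear γ δ f) (f_injective : Function.Injective f) (hδ : IsCoaction δ) :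
    IsCoaction γ where
  counit_comp := by
    have lTensor_injective : Function.Injective (f.lTensor K) :=
      Module.Flat.lTensor_preserves_injective_linearMap f f_injective
    rw [← LinearMap.cancel_left lTensor_injective]
    calc f.lTensor K ∘ₗ Coalgebra.counit.rTensor V ∘ₗ γ
        = Coalgebra.counit.rTensor W ∘ₗ f.lTensor H ∘ₗ γ := by
          simp only [← LinearMap.comp_assoc, LinearMap.lTensor_comp_rTensor,
            LinearMap.rTensor_comp_lTensor]
      _ = (Coalgebra.counit.rTensor W ∘ₗ δ) ∘ₗ f := by rw [hf, LinearMap.comp_assoc]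
      _ = (TensorProduct.lid K W).symm.toLinearMap ∘ₗ f := by rw [hδ.counit_comp]
      _ = f.lTensor K ∘ₗ (TensorProduct.lid K V).symm.toLinearMap := by ext; simp
  coassoc := by
    have lTensor_injective : Function.Injective (f.lTensor H) :=
      Module.Flat.lTensor_preserves_injective_linearMap f f_injective
    have lTensor_comp_colinear :
        IsColinear γ (rTensorCoaction Coalgebra.comul W) (f.lTensor H ∘ₗ γ) := by
      rw [hf]
      exact hδ.isColinear.comp hf
    exact (lTensor_comp_colinear.of_comp_of_injective
      ((IsColinear.id Coalgebra.comul).map f) lTensor_injective).symm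

end IsColinear

lemma IsCoaction.rTensorCoaction [Coalgebra K H] {γ : V →ₗ[K] H ⊗[K] V} (hγ : IsCoaction γ) :
    IsCoaction (rTensorCoaction γ L) where
  counit_comp := by
    have counit_assoc : Coalgebra.counit.rTensor (V ⊗[K] L) ∘ₗ
        (TensorProduct.assoc K H V L).toLinearMap =
        (TensorProduct.assoc K K V L).toLinearMap ∘ₗ
          (Coalgebra.counit.rTensor V).rTensor L := by
      ext; simp
    rw [_root_.rTensorCoaction, ← LinearMap.comp_assoc, counit_assoc, LinearMap.comp_assoc,
      ← LinearMap.rTensor_comp, hγ.counit_comp]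
    ext; simp
  coassoc := ((IsColinear.assoc Coalgebra.comul).comp (hγ.isColinear.map LinearMap.id)).symm

lemma exists_isColinear_subtype [Module.Flat K H] {γ : V →ₗ[K] H ⊗[K] V} {S : Submodule K V}
    (hS : ∀ x ∈ S, γ x ∈ LinearMap.range (S.subtype.lTensor H)) :
    ∃ β : S →ₗ[K] H ⊗[K] S, IsColinear β γ S.subtype := by
  have subtype_injective : Function.Injective (S.subtype.lTensor H) :=
    Module.Flat.lTensor_preserves_injective_linearMap _ S.injective_subtype
  let e := LinearEquiv.ofInjective _ subtype_injective
  refine ⟨e.symm.toLinearMap ∘ₗ (γ ∘ₗ S.subtype).codRestrict _ fun x ↦ hS x x.2, ?_⟩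
  exact LinearMap.ext fun x ↦ LinearEquiv.ofInjective_symm_apply _ (h := subtype_injective) _

theorem IsCoaction.exists_restrict_iInf_eqLocus [Coalgebra K H] [Module.Free K H]
    {γ : V →ₗ[K] H ⊗[K] V} (hγ : IsCoaction γ) {ι : Type*} {M : ι → Type*}
    [∀ i, AddCommMonoid (M i)] [∀ i, Module K (M i)] {δ : ∀ i, M i →ₗ[K] H ⊗[K] M i}
    {f g : ∀ i, V →ₗ[K] M i} (hf : ∀ i, IsColinear γ (δ i) (f i))
    (hg : ∀ i, IsColinear γ (δ i) (g i)) :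
    ∃ β : (⨅ i, LinearMap.eqLocus (f i) (g i) : Submodule K V) →ₗ[K]
        H ⊗[K] (⨅ i, LinearMap.eqLocus (f i) (g i) : Submodule K V),
      IsColinear β γ (⨅ i, LinearMap.eqLocus (f i) (g i) : Submodule K V).subtype ∧
        IsCoaction β := by
  obtain ⟨β, hβ⟩ := exists_isColinear_subtype (γ := γ)
    (S := ⨅ i, LinearMap.eqLocus (f i) (g i)) fun x hx ↦ by
      refine mem_range_lTensor_subtype_iInf_eqLocus f g (γ x) fun i ↦ ?_
      have hfg : f i x = g i x := (Submodule.mem_iInf _).1 hx i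
      calc (f i).lTensor H (γ x) = δ i (f i x) := LinearMap.congr_fun (hf i) x
        _ = δ i (g i x) := by rw [hfg]
        _ = (g i).lTensor H (γ x) := (LinearMap.congr_fun (hg i) x).symm
  exact ⟨β, hβ, hβ.isCoaction_of_injective (Submodule.injective_subtype _) hγ⟩

end Coaction

section Induced

variable {K H B L N ι : Type*} [CommSemiring K] [AddCommMonoid H] [Module K H] [Coalgebra K H]
  [AddCommMonoid B] [Module K B] [AddCommMonoid L] [Module K L] [AddCommMonoid N] [Module K N]

/-- The subspace `L'` for a coalgebra `H`, a linear map `π : H → B`, an element `u` of `B` in place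
of `1_B`, and a family of linear maps `η i` in place of the operators `η_b`. -/
noncomputable def inducedSubmodule (π : H →ₗ[K] B) (u : B) (η : ι → L →ₗ[K] N) :
    Submodule K (H ⊗[K] L) :=
  ⨅ i, LinearMap.eqLocus (TensorProduct.map (π.lTensor H ∘ₗ Coalgebra.comul) (η i))
    (TensorProduct.map ((TensorProduct.mk K H B).flip u) (η i))

theorem inducedSubspace_comodule_structure_general [Module.Free K H] (π : H →ₗ[K] B) (u : B)
    (η : ι → L →ₗ[K] N) :
    ∃ β : inducedSubmodule π u η →ₗ[K] H ⊗[K] inducedSubmodule π u η,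
      IsColinear β (rTensorCoaction Coalgebra.comul L) (inducedSubmodule π u η).subtype ∧
        IsCoaction β := by
  have lTensor_comul_colinear : IsColinear Coalgebra.comul (rTensorCoaction Coalgebra.comul B)
      (π.lTensor H ∘ₗ Coalgebra.comul) :=
    ((IsColinear.id Coalgebra.comul).map π).comp isCoaction_comul.isColinear
  exact isCoaction_comul.rTensorCoaction.exists_restrict_iInf_eqLocus
    (fun i ↦ lTensor_comul_colinear.map (η i))
    (fun i ↦ (IsColinear.mk_flip Coalgebra.comul u).map (η i))

end Induced

lemma inducedSubspace_eq_inducedSubmodule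
    {K : Type*} [Field K] {H : Type*} [Ring H] [HopfAlgebra K H]
    {B : Type*} [Ring B] [Bialgebra K B] (π : H →ₐc[K] B)
    {L : Type*} [AddCommGroup L] [Module K L] (η : B ⊗[K] L →ₗ[K] L) :
    inducedSubspace K H B π L η =
      inducedSubmodule (π : H →ₗ[K] B) 1 fun b ↦ η ∘ₗ TensorProduct.mk K B L b := by
  ext w
  rw [inducedSubmodule, Submodule.mem_iInf]
  rfl

/-- The restriction `β` of `Δ ⊗ id_L` to `L'` takes values in `H ⊗ L'` and defines a
left `H`-comodule structure on `L'`. -/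
theorem inducedSubspace_comodule_structure
    (K : Type*) [Field K]
    (H : Type*) [Ring H] [HopfAlgebra K H]
    (B : Type*) [Ring B] [Bialgebra K B]
    (π : H →ₐc[K] B) (hπ : Function.Surjective π)
    (L : Type*) [AddCommGroup L] [Module K L]
    (η : B ⊗[K] L →ₗ[K] L)
    (hη1 : ∀ l : L, η ((1 : B) ⊗ₜ[K] l) = l)
    (hη2 : ∀ (b b' : B) (l : L),
      η (b ⊗ₜ[K] η (b' ⊗ₜ[K] l)) = η ((b * b') ⊗ₜ[K] l)) :
    ∃ β : (inducedSubspace K H B π L η) →ₗ[K]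
        H ⊗[K] (inducedSubspace K H B π L η),
      -- β is the restriction of Δ ⊗ id_L to L'
      ((TensorProduct.map (LinearMap.id : H →ₗ[K] H)
          (inducedSubspace K H B π L η).subtype) ∘ₗ β
        = (TensorProduct.assoc K H H L).toLinearMap
            ∘ₗ (TensorProduct.map Coalgebra.comul (LinearMap.id : L →ₗ[K] L))
            ∘ₗ (inducedSubspace K H B π L η).subtype) ∧
      -- β is a left H-comodule structure on L'
      ((TensorProduct.map Coalgebra.counit
          (LinearMap.id : (inducedSubspace K H B π L η) →ₗ[K]
            (inducedSubspace K H B π L η))) ∘ₗ β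
        = (TensorProduct.lid K (inducedSubspace K H B π L η)).symm.toLinearMap) ∧
      ((TensorProduct.assoc K H H (inducedSubspace K H B π L η)).toLinearMap
          ∘ₗ (TensorProduct.map Coalgebra.comul
                (LinearMap.id : (inducedSubspace K H B π L η) →ₗ[K]
                  (inducedSubspace K H B π L η))) ∘ₗ β
        = (TensorProduct.map (LinearMap.id : H →ₗ[K] H) β) ∘ₗ β) := by
  rw [inducedSubspace_eq_inducedSubmodule]
  obtain ⟨β, hβ, hcoaction⟩ := inducedSubspace_comodule_structure_general (π : H →ₗ[K] B) 1
    fun b ↦ η ∘ₗ TensorProduct.mk K B L b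
  exact ⟨β, hβ, hcoaction.counit_comp, hcoaction.coassoc⟩
end

section
/- Let H be a Hopf algebra over a field K, (B, π) a quantum subgroup of H, and (L, η) a left B-module, and let L' = { w ∈ H ⊗ L : for all b ∈ B, (R ⊗ η_b)(w) = (ι ⊗ η_b)(w) } where R = (id_H ⊗ π) ∘ Δ. Define α : H ⊗ L' → L' by α(h ⊗ w) = (id_H ⊗ η_{π(h)})(w), β : L' → H ⊗ L' as the restriction of Δ ⊗ id_L, and φ_H : H ⊗ (H ⊗ L') → H ⊗ L' by φ_H(h ⊗ h' ⊗ w) = h' ⊗ (id_H ⊗ η_{π(h)})(w). Then β is a left H-module homomorphism with respect to α and φ_H, i.e. β ∘ α = φ_H ∘ (id_H ⊗ β) as K-linear maps H ⊗ L' → H ⊗ L'; consequently (L', α, β, φ_H) is a left Hopf representation of H of the first type. -/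
open TensorProduct

/-!
The ambient space `H ⊗ L` is itself a Hopf representation of the first type: `Δ ⊗ id_L` is the
cofree coaction, it only touches the left tensor factor, and so it commutes with the action of `H`
through `η` and `π` on the right factor. The maps `α`, `β`, `φ_H` are the restrictions of this
structure along the inclusion `L' → H ⊗ L`. As `H` is flat, the inclusion stays injective after
tensoring with `H` once or twice, so every axiom of `H ⊗ L` descends to `L'`.
-/

section Action

variable {R A B M N : Type*} [CommSemiring R] [Semiring A] [Algebra R A] [Semiring B] [Algebra R B]
  [AddCommMonoid M] [Module R M] [AddCommMonoid N] [Module R N]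

/-- The linear map `α : A ⊗ M → M` makes `M` a left `A`-module. This is a
predicate rather than a `Module` instance because `A ⊗ M` already has the instance by left
multiplication on `A`, which is not the action `φ_H`. -/
structure IsLeftAction (α : A ⊗[R] M →ₗ[R] M) : Prop where
  one_tmul (m : M) : α (1 ⊗ₜ m) = m
  tmul_tmul (a a' : A) (m : M) : α (a ⊗ₜ α (a' ⊗ₜ m)) = α ((a * a') ⊗ₜ m)

theorem IsLeftAction.compHom {η : B ⊗[R] M →ₗ[R] M} (hη : IsLeftAction η) (π : A →ₐ[R] B) :
    IsLeftAction (η ∘ₗ π.toLinearMap.rTensor M) where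
  one_tmul m := by simp [hη.one_tmul]
  tmul_tmul a a' m := by simp [hη.tmul_tmul]

theorem IsLeftAction.of_injective {αM : A ⊗[R] M →ₗ[R] M} (hαM : IsLeftAction αM)
    {αN : A ⊗[R] N →ₗ[R] N} {f : N →ₗ[R] M} (hf : Function.Injective f)
    (hαN : f ∘ₗ αN = αM ∘ₗ f.lTensor A) : IsLeftAction αN := by
  have f_apply (a : A) (n : N) : f (αN (a ⊗ₜ n)) = αM (a ⊗ₜ f n) :=
    LinearMap.congr_fun hαN (a ⊗ₜ n)
  exact
    { one_tmul := fun n ↦ hf <| by rw [f_apply, hαM.one_tmul]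
      tmul_tmul := fun a a' n ↦ hf <| by simp only [f_apply, hαM.tmul_tmul] }

variable (C : Type*) [AddCommMonoid C] [Module R C]

/-- The action of `A` on the right factor of `C ⊗ M`, that is `a • (c ⊗ m) = c ⊗ (a • m)`. Both
`α`, on `H ⊗ L`, and `φ_H` have this form. -/
noncomputable def lTensorAction (α : A ⊗[R] M →ₗ[R] M) : A ⊗[R] (C ⊗[R] M) →ₗ[R] C ⊗[R] M :=
  TensorProduct.lift (LinearMap.lTensorHom C ∘ₗ TensorProduct.curry α)

variable {C} in
theorem lTensorAction_tmul (α : A ⊗[R] M →ₗ[R] M) (a : A) (z : C ⊗[R] M) :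
    lTensorAction C α (a ⊗ₜ z) = (TensorProduct.curry α a).lTensor C z :=
  rfl

theorem IsLeftAction.lTensorAction {α : A ⊗[R] M →ₗ[R] M} (hα : IsLeftAction α) :
    IsLeftAction (lTensorAction C α) where
  one_tmul z := by
    have curry_one : TensorProduct.curry α 1 = LinearMap.id := LinearMap.ext hα.one_tmul
    rw [lTensorAction_tmul, curry_one, LinearMap.lTensor_id_apply]
  tmul_tmul a a' z := by
    have curry_mul : TensorProduct.curry α a ∘ₗ TensorProduct.curry α a' =
        TensorProduct.curry α (a * a') := LinearMap.ext (hα.tmul_tmul a a')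
    simp only [lTensorAction_tmul, ← LinearMap.lTensor_comp_apply, curry_mul]

end Action

theorem rTensor_tensor_comp_assoc {R M N P Q : Type*} [CommSemiring R]
    [AddCommMonoid M] [Module R M] [AddCommMonoid N] [Module R N]
    [AddCommMonoid P] [Module R P] [AddCommMonoid Q] [Module R Q] (f : P →ₗ[R] Q) :
    f.rTensor (M ⊗[R] N) ∘ₗ (TensorProduct.assoc R P M N).toLinearMap =
      (TensorProduct.assoc R Q M N).toLinearMap ∘ₗ (f.rTensor M).rTensor N :=
  TensorProduct.ext_threefold fun _ _ _ ↦ rfl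

section Coaction

variable {R C M N : Type*} [CommSemiring R] [AddCommMonoid C] [Module R C] [Coalgebra R C]
  [AddCommMonoid M] [Module R M] [AddCommMonoid N] [Module R N]

/-- The linear map `β : M → C ⊗ M` makes `M` a left `C`-comodule. -/
structure IsLeftCoaction (β : M →ₗ[R] C ⊗[R] M) : Prop where
  counit_comp : Coalgebra.counit.rTensor M ∘ₗ β = (TensorProduct.lid R M).symm.toLinearMap
  coassoc : (TensorProduct.assoc R C C M).toLinearMap ∘ₗ Coalgebra.comul.rTensor M ∘ₗ β =
    β.lTensor C ∘ₗ β

theorem IsLeftCoaction.of_injective [Module.Flat R C] {βM : M →ₗ[R] C ⊗[R] M}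
    (hβM : IsLeftCoaction βM) {βN : N →ₗ[R] C ⊗[R] N} {f : N →ₗ[R] M}
    (hf : Function.Injective f) (hβN : f.lTensor C ∘ₗ βN = βM ∘ₗ f) : IsLeftCoaction βN where
  counit_comp := by
    have f_injective : Function.Injective (f.lTensor R) :=
      Module.Flat.lTensor_preserves_injective_linearMap f hf
    refine (LinearMap.cancel_left f_injective).1 ?_
    calc f.lTensor R ∘ₗ Coalgebra.counit.rTensor N ∘ₗ βN
        = Coalgebra.counit.rTensor M ∘ₗ f.lTensor C ∘ₗ βN := by
          simp only [← LinearMap.comp_assoc, LinearMap.lTensor_comp_rTensor,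
            LinearMap.rTensor_comp_lTensor]
      _ = (TensorProduct.lid R M).symm.toLinearMap ∘ₗ f := by
          rw [hβN, ← LinearMap.comp_assoc, hβM.counit_comp]
      _ = f.lTensor R ∘ₗ (TensorProduct.lid R N).symm.toLinearMap := rfl
  coassoc := by
    have f_injective : Function.Injective ((f.lTensor C).lTensor C) :=
      Module.Flat.lTensor_preserves_injective_linearMap _
        (Module.Flat.lTensor_preserves_injective_linearMap f hf)
    refine (LinearMap.cancel_left f_injective).1 ?_
    calc (f.lTensor C).lTensor C ∘ₗ (TensorProduct.assoc R C C N).toLinearMap ∘ₗ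
          Coalgebra.comul.rTensor N ∘ₗ βN
        = (TensorProduct.assoc R C C M).toLinearMap ∘ₗ Coalgebra.comul.rTensor M ∘ₗ
            f.lTensor C ∘ₗ βN := by
          simp only [coassoc_simps]
      _ = (βM.lTensor C ∘ₗ βM) ∘ₗ f := by
          rw [hβN, ← hβM.coassoc]
          simp only [LinearMap.comp_assoc]
      _ = (f.lTensor C).lTensor C ∘ₗ βN.lTensor C ∘ₗ βN := by
          rw [LinearMap.comp_assoc, ← hβN, ← LinearMap.comp_assoc, ← LinearMap.comp_assoc,
            ← LinearMap.lTensor_comp, ← LinearMap.lTensor_comp, hβN]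

variable (R C M)

/-- The map `Δ ⊗ id_M : C ⊗ M → C ⊗ (C ⊗ M)`, the coaction of the cofree left `C`-comodule
on `M`. -/
noncomputable def cofreeCoaction : C ⊗[R] M →ₗ[R] C ⊗[R] (C ⊗[R] M) :=
  (TensorProduct.assoc R C C M).toLinearMap ∘ₗ Coalgebra.comul.rTensor M

theorem isLeftCoaction_cofreeCoaction : IsLeftCoaction (cofreeCoaction R C M) where
  counit_comp := by
    rw [cofreeCoaction, ← LinearMap.comp_assoc, rTensor_tensor_comp_assoc, LinearMap.comp_assoc,
      ← LinearMap.rTensor_comp, Coalgebra.rTensor_counit_comp_comul]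
    exact TensorProduct.ext' fun _ _ ↦ rfl
  coassoc := by
    let e := (TensorProduct.assoc R C C M).toLinearMap.lTensor C ∘ₗ
      (TensorProduct.assoc R C (C ⊗[R] C) M).toLinearMap
    have pentagon : (TensorProduct.assoc R C C (C ⊗[R] M)).toLinearMap ∘ₗ
          (TensorProduct.assoc R (C ⊗[R] C) C M).toLinearMap =
        e ∘ₗ (TensorProduct.assoc R C C C).toLinearMap.rTensor M :=
      TensorProduct.ext_fourfold fun _ _ _ _ ↦ rfl
    calc (TensorProduct.assoc R C C (C ⊗[R] M)).toLinearMap ∘ₗ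
          Coalgebra.comul.rTensor (C ⊗[R] M) ∘ₗ cofreeCoaction R C M
        = e ∘ₗ ((TensorProduct.assoc R C C C).toLinearMap ∘ₗ
            Coalgebra.comul.rTensor C ∘ₗ Coalgebra.comul).rTensor M := by
          rw [cofreeCoaction, ← LinearMap.comp_assoc (Coalgebra.comul.rTensor M),
            rTensor_tensor_comp_assoc, LinearMap.comp_assoc, ← LinearMap.comp_assoc, pentagon]
          simp only [LinearMap.rTensor_comp, LinearMap.comp_assoc]
      _ = e ∘ₗ (Coalgebra.comul.lTensor C ∘ₗ Coalgebra.comul).rTensor M := by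
          rw [Coalgebra.coassoc]
      _ = (cofreeCoaction R C M).lTensor C ∘ₗ cofreeCoaction R C M := by
          simp only [e, cofreeCoaction, coassoc_simps]

variable {R C M}

theorem lTensor_lTensor_comp_cofreeCoaction (f : M →ₗ[R] N) :
    (f.lTensor C).lTensor C ∘ₗ cofreeCoaction R C M = cofreeCoaction R C N ∘ₗ f.lTensor C := by
  simp only [cofreeCoaction, coassoc_simps]

end Coaction

section HopfRepresentation

variable {R H M N : Type*} [CommSemiring R] [Semiring H] [Bialgebra R H]
  [AddCommMonoid M] [Module R M] [AddCommMonoid N] [Module R N]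

/-- The quadruple `(M, α, β, φ)` is a left Hopf representation of `H` of the first type: `α` and
`φ` are left actions on `M` and `H ⊗ M`, `β` is a left coaction, and `β` is `H`-linear from `α`
to `φ`. -/
structure IsFirstTypeHopfRepresentation (α : H ⊗[R] M →ₗ[R] M) (β : M →ₗ[R] H ⊗[R] M)
    (φ : H ⊗[R] (H ⊗[R] M) →ₗ[R] H ⊗[R] M) : Prop where
  comp_eq : β ∘ₗ α = φ ∘ₗ β.lTensor H
  isLeftAction : IsLeftAction α
  isLeftCoaction : IsLeftCoaction β
  isLeftAction_tensor : IsLeftAction φ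

theorem isFirstTypeHopfRepresentation_cofreeCoaction {α : H ⊗[R] M →ₗ[R] M}
    (hα : IsLeftAction α) :
    IsFirstTypeHopfRepresentation (lTensorAction H α) (cofreeCoaction R H M)
      (lTensorAction H (lTensorAction H α)) where
  comp_eq := TensorProduct.ext' fun h ↦
    LinearMap.congr_fun (lTensor_lTensor_comp_cofreeCoaction (TensorProduct.curry α h)).symm
  isLeftAction := hα.lTensorAction H
  isLeftCoaction := isLeftCoaction_cofreeCoaction R H M
  isLeftAction_tensor := (hα.lTensorAction H).lTensorAction H

theorem IsFirstTypeHopfRepresentation.of_injective [Module.Flat R H]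
    {αM : H ⊗[R] M →ₗ[R] M} {βM : M →ₗ[R] H ⊗[R] M} {φM : H ⊗[R] (H ⊗[R] M) →ₗ[R] H ⊗[R] M}
    (hM : IsFirstTypeHopfRepresentation αM βM φM)
    {αN : H ⊗[R] N →ₗ[R] N} {βN : N →ₗ[R] H ⊗[R] N} {φN : H ⊗[R] (H ⊗[R] N) →ₗ[R] H ⊗[R] N}
    {f : N →ₗ[R] M} (hf : Function.Injective f)
    (hαN : f ∘ₗ αN = αM ∘ₗ f.lTensor H)
    (hβN : f.lTensor H ∘ₗ βN = βM ∘ₗ f)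
    (hφN : f.lTensor H ∘ₗ φN = φM ∘ₗ (f.lTensor H).lTensor H) :
    IsFirstTypeHopfRepresentation αN βN φN := by
  have f_injective : Function.Injective (f.lTensor H) :=
    Module.Flat.lTensor_preserves_injective_linearMap f hf
  refine ⟨(LinearMap.cancel_left f_injective).1 ?_, hM.isLeftAction.of_injective hf hαN,
    hM.isLeftCoaction.of_injective hf hβN, hM.isLeftAction_tensor.of_injective f_injective hφN⟩
  calc f.lTensor H ∘ₗ βN ∘ₗ αN
      = βM ∘ₗ αM ∘ₗ f.lTensor H := by
        rw [← LinearMap.comp_assoc, hβN, LinearMap.comp_assoc, hαN]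
    _ = φM ∘ₗ (βM ∘ₗ f).lTensor H := by
        rw [← LinearMap.comp_assoc, hM.comp_eq, LinearMap.comp_assoc, LinearMap.lTensor_comp]
    _ = f.lTensor H ∘ₗ φN ∘ₗ βN.lTensor H := by
        rw [← hβN, LinearMap.lTensor_comp, ← LinearMap.comp_assoc, ← hφN, LinearMap.comp_assoc]

end HopfRepresentation

theorem inducedSubspace_first_type_hopf_representation_general
    {R H B L : Type*} [CommSemiring R] [Semiring H] [Bialgebra R H] [Module.Flat R H]
    [Semiring B] [Algebra R B] (π : H →ₐ[R] B) [AddCommMonoid L] [Module R L]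
    {η : B ⊗[R] L →ₗ[R] L} (hη : IsLeftAction η) {S : Submodule R (H ⊗[R] L)}
    {α : H ⊗[R] S →ₗ[R] S}
    (hα : ∀ (h : H) (w : S), (α (h ⊗ₜ w) : H ⊗[R] L) =
      (TensorProduct.curry η (π h)).lTensor H (w : H ⊗[R] L))
    {β : S →ₗ[R] H ⊗[R] S}
    (hβ : S.subtype.lTensor H ∘ₗ β = cofreeCoaction R H L ∘ₗ S.subtype)
    {φ : H ⊗[R] (H ⊗[R] S) →ₗ[R] H ⊗[R] S}
    (hφ : ∀ (h h' : H) (w : S), S.subtype.lTensor H (φ (h ⊗ₜ (h' ⊗ₜ w))) =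
      h' ⊗ₜ (TensorProduct.curry η (π h)).lTensor H (w : H ⊗[R] L)) :
    IsFirstTypeHopfRepresentation α β φ :=
  (isFirstTypeHopfRepresentation_cofreeCoaction (hη.compHom π)).of_injective
    S.injective_subtype (TensorProduct.ext' hα) hβ (TensorProduct.ext_threefold' hφ)

/-- With `α(h ⊗ w) = (id_H ⊗ η_{π(h)})(w)`, `β` the restriction of `Δ ⊗ id_L` to `L'`,
and `φ_H(h ⊗ h' ⊗ w) = h' ⊗ (id_H ⊗ η_{π(h)})(w)`, the map `β` is a left `H`-module
homomorphism with respect to `α` and `φ_H`, i.e. `β ∘ α = φ_H ∘ (id_H ⊗ β)`;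
consequently `(L', α, β, φ_H)` is a left Hopf representation of `H` of the first
type. -/
theorem inducedSubspace_first_type_hopf_representation
    (K : Type*) [Field K]
    (H : Type*) [Ring H] [HopfAlgebra K H]
    (B : Type*) [Ring B] [Bialgebra K B]
    (π : H →ₐc[K] B) (hπ : Function.Surjective π)
    (L : Type*) [AddCommGroup L] [Module K L]
    (η : B ⊗[K] L →ₗ[K] L)
    (hη1 : ∀ l : L, η ((1 : B) ⊗ₜ[K] l) = l)
    (hη2 : ∀ (b b' : B) (l : L),
      η (b ⊗ₜ[K] η (b' ⊗ₜ[K] l)) = η ((b * b') ⊗ₜ[K] l))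
    (α : H ⊗[K] (inducedSubspace K H B π L η) →ₗ[K] (inducedSubspace K H B π L η))
    (hα : ∀ (h : H) (w : inducedSubspace K H B π L η),
      ((α (h ⊗ₜ[K] w) : inducedSubspace K H B π L η) : H ⊗[K] L)
        = TensorProduct.map (LinearMap.id : H →ₗ[K] H)
            (η ∘ₗ TensorProduct.mk K B L (π h)) (w : H ⊗[K] L))
    (β : (inducedSubspace K H B π L η) →ₗ[K] H ⊗[K] (inducedSubspace K H B π L η))
    (hβ : (TensorProduct.map (LinearMap.id : H →ₗ[K] H)
        (inducedSubspace K H B π L η).subtype) ∘ₗ β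
      = (TensorProduct.assoc K H H L).toLinearMap
          ∘ₗ (TensorProduct.map Coalgebra.comul (LinearMap.id : L →ₗ[K] L))
          ∘ₗ (inducedSubspace K H B π L η).subtype)
    (φH : H ⊗[K] (H ⊗[K] (inducedSubspace K H B π L η)) →ₗ[K]
        H ⊗[K] (inducedSubspace K H B π L η))
    (hφH : ∀ (h h' : H) (w : inducedSubspace K H B π L η),
      (TensorProduct.map (LinearMap.id : H →ₗ[K] H)
          (inducedSubspace K H B π L η).subtype)
        (φH (h ⊗ₜ[K] (h' ⊗ₜ[K] w)))
      = h' ⊗ₜ[K] (TensorProduct.map (LinearMap.id : H →ₗ[K] H)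
          (η ∘ₗ TensorProduct.mk K B L (π h)) (w : H ⊗[K] L))) :
    -- β is a left H-module homomorphism with respect to α and φ_H
    (β ∘ₗ α = φH ∘ₗ (TensorProduct.map (LinearMap.id : H →ₗ[K] H) β)) ∧
    -- (L', α) is a left H-module
    (∀ w : inducedSubspace K H B π L η, α ((1 : H) ⊗ₜ[K] w) = w) ∧
    (∀ (h h' : H) (w : inducedSubspace K H B π L η),
      α (h ⊗ₜ[K] α (h' ⊗ₜ[K] w)) = α ((h * h') ⊗ₜ[K] w)) ∧
    -- (L', β) is a left H-comodule
    ((TensorProduct.map Coalgebra.counit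
        (LinearMap.id : (inducedSubspace K H B π L η) →ₗ[K]
          (inducedSubspace K H B π L η))) ∘ₗ β
      = (TensorProduct.lid K (inducedSubspace K H B π L η)).symm.toLinearMap) ∧
    ((TensorProduct.assoc K H H (inducedSubspace K H B π L η)).toLinearMap
        ∘ₗ (TensorProduct.map Coalgebra.comul
              (LinearMap.id : (inducedSubspace K H B π L η) →ₗ[K]
                (inducedSubspace K H B π L η))) ∘ₗ β
      = (TensorProduct.map (LinearMap.id : H →ₗ[K] H) β) ∘ₗ β) ∧
    -- (H ⊗ L', φ_H) is a left H-module
    (∀ z : H ⊗[K] (inducedSubspace K H B π L η), φH ((1 : H) ⊗ₜ[K] z) = z) ∧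
    (∀ (h h' : H) (z : H ⊗[K] (inducedSubspace K H B π L η)),
      φH (h ⊗ₜ[K] φH (h' ⊗ₜ[K] z)) = φH ((h * h') ⊗ₜ[K] z)) := by
  obtain ⟨comp_eq, hα', hβ', hφ'⟩ := inducedSubspace_first_type_hopf_representation_general
    (π : H →ₐ[K] B) ⟨hη1, hη2⟩ hα hβ hφH
  exact ⟨comp_eq, hα'.1, hα'.2, hβ'.1, hβ'.2, hφ'.1, hφ'.2⟩
end
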